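/- Let W ⊂ GL(V) be a finite complex reflection group, W′ ⊆ W a subgroup generated by reflections, and E′ a j-inductible irreducible representation of W′, realized as a W′-subrepresentation of S^{b(E′)}(V). Let E be the smallest W-stable subspace of S^{b(E′)}(V) containing E′. Then E is an irreducible representation of W, b(E) = b(E′), and E is itself j-inductible. -/

import Mathlib

/-!
Both `b(E) = b(E′)` and the multiplicity statement follow from one injection: a `W`-equivariant map
`E → S^d(V)` restricts to a `W′`-equivariant map `E′ → S^d(V)`, and the restriction determines it,
since its kernel is `W`-stable and `E` is generated by `E′`. Irreducibility is the converse of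
Schur's lemma: multiplicity one forces every endomorphism of `E` to be a scalar, and by Maschke's
theorem a proper nonzero subrepresentation would be the image of a projection, which is not scalar.
-/

namespace Spets

/-- The general linear group of `V = ℂ^n`. -/
abbrev GLn (n : ℕ) := Matrix.GeneralLinearGroup (Fin n) ℂ

/-- The action of a matrix `g` on the symmetric algebra `S(V)` of `V = ℂ^n`,
realized as the polynomial ring, by linear substitution of the variables. -/
noncomputable def polySub {n : ℕ} (g : Matrix (Fin n) (Fin n) ℂ) :
    MvPolynomial (Fin n) ℂ →ₐ[ℂ] MvPolynomial (Fin n) ℂ :=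
  MvPolynomial.aeval fun i => ∑ j, g j i • MvPolynomial.X j

lemma polySub_one {n : ℕ} : polySub (1 : Matrix (Fin n) (Fin n) ℂ) = AlgHom.id ℂ _ := by
  apply MvPolynomial.algHom_ext
  intro i
  simp [polySub, Matrix.one_apply, ite_smul, Finset.sum_ite_eq]

lemma polySub_mul {n : ℕ} (g h : Matrix (Fin n) (Fin n) ℂ) :
    polySub (g * h) = (polySub g).comp (polySub h) := by
  apply MvPolynomial.algHom_ext
  intro i
  simp only [polySub, MvPolynomial.aeval_X, AlgHom.comp_apply, map_sum, map_smul,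
    Matrix.mul_apply, Finset.sum_smul, Finset.smul_sum, smul_smul]
  rw [Finset.sum_comm]
  exact Finset.sum_congr rfl fun y _ => Finset.sum_congr rfl fun x _ => by rw [mul_comm]

/-- The space of `W`-equivariant linear maps from a representation `(ρ, M)` of
`W ⊆ GL(V)` to the `d`-th symmetric power `S^d(V)`, realized as the space of
homogeneous polynomials of degree `d`. -/
noncomputable def homSpace {n : ℕ} (W : Subgroup (GLn n)) {M : Type}
    [AddCommGroup M] [Module ℂ M] (ρ : Representation ℂ W M) (d : ℕ) :
    Submodule ℂ (M →ₗ[ℂ] MvPolynomial (Fin n) ℂ) where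
  carrier := {f | (∀ v, f v ∈ MvPolynomial.homogeneousSubmodule (Fin n) ℂ d) ∧
      ∀ (g : W) (v : M), f (ρ g v) = polySub g.val.val (f v)}
  add_mem' := by
    rintro f₁ f₂ ⟨h₁, h₁'⟩ ⟨h₂, h₂'⟩
    refine ⟨fun v => ?_, fun g v => ?_⟩
    · simpa using add_mem (h₁ v) (h₂ v)
    · simp [h₁' g v, h₂' g v]
  zero_mem' := ⟨fun v => by simp, fun g v => by simp⟩
  smul_mem' := by
    rintro c f ⟨h, h'⟩
    refine ⟨fun v => ?_, fun g v => ?_⟩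
    · simpa using Submodule.smul_mem _ c (h v)
    · simp [h' g v]

/-- The representation `ρ` occurs in `S^d(V)`. -/
def occursIn {n : ℕ} (W : Subgroup (GLn n)) {M : Type} [AddCommGroup M] [Module ℂ M]
    (ρ : Representation ℂ W M) (d : ℕ) : Prop :=
  homSpace W ρ d ≠ ⊥

/-- `b(ρ)`: the smallest degree `d` such that `ρ` occurs in `S^d(V)`. -/
noncomputable def bval {n : ℕ} (W : Subgroup (GLn n)) {M : Type} [AddCommGroup M]
    [Module ℂ M] (ρ : Representation ℂ W M) : ℕ :=
  sInf {d | occursIn W ρ d}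

/-- `p` is a subrepresentation of `(ρ, M)`. -/
def IsSubrep {G M : Type*} [Monoid G] [AddCommGroup M] [Module ℂ M]
    (ρ : Representation ℂ G M) (p : Submodule ℂ M) : Prop :=
  ∀ (g : G) (v : M), v ∈ p → ρ g v ∈ p

/-- Irreducibility of a representation. -/
def IrredRep {G M : Type*} [Monoid G] [AddCommGroup M] [Module ℂ M]
    (ρ : Representation ℂ G M) : Prop :=
  (∃ v : M, v ≠ 0) ∧ ∀ p : Submodule ℂ M, IsSubrep ρ p → p = ⊥ ∨ p = ⊤

/-- A subspace of the polynomial ring stable under the substitution action of `W`. -/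
def StableUnder {n : ℕ} (W : Subgroup (GLn n)) (p : Submodule ℂ (MvPolynomial (Fin n) ℂ)) : Prop :=
  ∀ (g : W) (f : MvPolynomial (Fin n) ℂ), f ∈ p → polySub g.val.val f ∈ p

/-- The representation of `W` on a `W`-stable subspace of the polynomial ring. -/
noncomputable def subRep {n : ℕ} (W : Subgroup (GLn n)) (p : Submodule ℂ (MvPolynomial (Fin n) ℂ))
    (hp : StableUnder W p) : Representation ℂ W p where
  toFun g := (polySub g.val.val).toLinearMap.restrict (fun f hf => hp g f hf)
  map_one' := by
    apply LinearMap.ext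
    rintro ⟨f, hf⟩
    apply Subtype.ext
    show polySub ((1 : W) : GLn n).val f = f
    have h1 : ((1 : W) : GLn n).val = (1 : Matrix (Fin n) (Fin n) ℂ) := rfl
    rw [h1, polySub_one]
    rfl
  map_mul' := by
    intro a b
    apply LinearMap.ext
    rintro ⟨f, hf⟩
    apply Subtype.ext
    show polySub ((a * b : W) : GLn n).val f = polySub a.val.val (polySub b.val.val f)
    have h2 : ((a * b : W) : GLn n).val = a.val.val * b.val.val := rfl
    rw [h2, polySub_mul]
    rfl

/-- The smallest `W`-stable subspace of `S^d(V)` containing `p`. -/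
noncomputable def wSpan {n : ℕ} (W : Subgroup (GLn n)) (d : ℕ)
    (p : Submodule ℂ (MvPolynomial (Fin n) ℂ)) : Submodule ℂ (MvPolynomial (Fin n) ℂ) :=
  sInf {q | q ≤ MvPolynomial.homogeneousSubmodule (Fin n) ℂ d ∧ StableUnder W q ∧ p ≤ q}

lemma wSpan_stable {n : ℕ} (W : Subgroup (GLn n)) (d : ℕ)
    (p : Submodule ℂ (MvPolynomial (Fin n) ℂ)) : StableUnder W (wSpan W d p) := by
  intro g f hf
  rw [wSpan, Submodule.mem_sInf] at hf ⊢
  intro q hq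
  exact hq.2.1 g f (hf q hq)

/-- `g` is a (pseudo-)reflection of `GL(V)`: `g ≠ 1` and `g` fixes a hyperplane
pointwise, i.e. the range of `g - 1` is a line. -/
def IsRefl {n : ℕ} (g : GLn n) : Prop :=
  g.val ≠ 1 ∧ Module.finrank ℂ (LinearMap.range (g.val - 1).mulVecLin) = 1

/-- `W` is generated by its reflections. -/
def IsReflGroup {n : ℕ} (W : Subgroup (GLn n)) : Prop :=
  Subgroup.closure {g | g ∈ W ∧ IsRefl g} = W

lemma subtype_ne_zero {R M : Type*} [Semiring R] [AddCommMonoid M] [Module R M]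
    {p : Submodule R M} (hne : p ≠ ⊥) : p.subtype ≠ 0 := fun h =>
  hne <| by rw [← Submodule.range_subtype p, h, LinearMap.range_zero]

lemma finrank_eq_one_of_injective {K V V' : Type*} [DivisionRing K] [AddCommGroup V] [Module K V]
    [Nontrivial V] [AddCommGroup V'] [Module K V'] {f : V →ₗ[K] V'} (hf : Function.Injective f)
    (h : Module.finrank K V' = 1) : Module.finrank K V = 1 := by
  have : FiniteDimensional K V' := .of_finrank_eq_succ h
  have : FiniteDimensional K V := .of_injective f hf
  exact le_antisymm ((LinearMap.finrank_le_finrank_of_injective hf).trans_eq h) Module.finrank_pos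

section Schur

variable {k : Type*} [Field k]

lemma isSimpleModule_of_algebraMap_end_surjective {A M : Type*} [Ring A] [Algebra k A]
    [AddCommGroup M] [Module k M] [Module A M] [IsScalarTower k A M] [Nontrivial M]
    [IsSemisimpleModule A M] (h : Function.Surjective (algebraMap k (Module.End A M))) :
    IsSimpleModule A M := by
  refine (isSimpleModule_iff A M).2 { eq_bot_or_eq_top := fun q => ?_ }
  obtain ⟨q', hq⟩ := exists_isCompl q
  obtain ⟨c, hc⟩ := h (q.projection q' hq)
  have hproj (v : M) : c • v = q.projection q' hq v := DFunLike.congr_fun hc v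
  rcases eq_or_ne c 0 with rfl | hc0
  · refine .inl <| q.eq_bot_iff.2 fun v hv => ?_
    rw [← Submodule.projection_apply_of_mem_left hq hv, ← hproj, zero_smul]
  · refine .inr <| q.eq_top_iff'.2 fun v => ?_
    have hcv : c • v ∈ q.restrictScalars k :=
      (hproj v).symm ▸ Submodule.projection_apply_mem hq v
    exact (Submodule.smul_mem_iff _ hc0).1 hcv

lemma isIrreducible_of_algebraMap_intertwiningMap_surjective {G M : Type*} [Monoid G]
    [AddCommGroup M] [Module k M] [Nontrivial M] (ρ : Representation k G M)
    [ρ.IsSemisimpleRepresentation]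
    (h : Function.Surjective (algebraMap k (ρ.IntertwiningMap ρ))) : ρ.IsIrreducible := by
  have : IsSemisimpleModule (MonoidAlgebra k G) ρ.asModule :=
    ρ.isSemisimpleRepresentation_iff_isSemisimpleModule_asModule.1 inferInstance
  have : Nontrivial ρ.asModule := ‹Nontrivial M›
  refine ρ.irreducible_iff_isSimpleModule_asModule.2 <|
    isSimpleModule_of_algebraMap_end_surjective (k := k) ?_
  exact (Representation.IntertwiningMap.equivAlgEnd (ρ := ρ)).surjective.comp h

lemma irredRep_of_isIrreducible {G M : Type*} [Monoid G] [AddCommGroup M] [Module ℂ M]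
    {ρ : Representation ℂ G M} (h : ρ.IsIrreducible) : IrredRep ρ := by
  have htop : (⊤ : Submodule ℂ M) ≠ ⊥ := fun htop =>
    top_ne_bot (α := Subrepresentation ρ) (Subrepresentation.toSubmodule_injective htop)
  obtain ⟨v, -, hv⟩ := Submodule.exists_mem_ne_zero_of_ne_bot htop
  refine ⟨⟨v, hv⟩, fun q hq => ?_⟩
  exact (h.eq_bot_or_eq_top ⟨q, hq⟩).imp
    (congrArg Subrepresentation.toSubmodule) (congrArg Subrepresentation.toSubmodule)

end Schur

section EquivariantMaps

open MvPolynomial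

variable {n : ℕ} {W W' : Subgroup (GLn n)} {p E : Submodule ℂ (MvPolynomial (Fin n) ℂ)} {b d : ℕ}

lemma isHomogeneous_polySub (g : Matrix (Fin n) (Fin n) ℂ) {f : MvPolynomial (Fin n) ℂ}
    (hf : f.IsHomogeneous d) : (polySub g f).IsHomogeneous d := by
  have hlinear (i : Fin n) : (∑ j, g j i • X j : MvPolynomial (Fin n) ℂ).IsHomogeneous 1 :=
    .sum _ _ _ fun j _ => (homogeneousSubmodule (Fin n) ℂ 1).smul_mem _ (isHomogeneous_X ℂ j)
  simpa only [polySub, one_mul] using hf.aeval _ hlinear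

lemma stableUnder_homogeneousSubmodule (W : Subgroup (GLn n)) (d : ℕ) :
    StableUnder W (homogeneousSubmodule (Fin n) ℂ d) :=
  fun g _ hf => isHomogeneous_polySub g.val.val hf

lemma le_wSpan (W : Subgroup (GLn n)) (d : ℕ) (p : Submodule ℂ (MvPolynomial (Fin n) ℂ)) :
    p ≤ wSpan W d p :=
  le_sInf fun _ hq => hq.2.2

lemma wSpan_le_homogeneousSubmodule (W : Subgroup (GLn n))
    (hp : p ≤ homogeneousSubmodule (Fin n) ℂ d) :
    wSpan W d p ≤ homogeneousSubmodule (Fin n) ℂ d :=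
  sInf_le ⟨le_rfl, stableUnder_homogeneousSubmodule W d, hp⟩

lemma wSpan_ne_bot (W : Subgroup (GLn n)) (d : ℕ) (hp : p ≠ ⊥) : wSpan W d p ≠ ⊥ :=
  ne_bot_of_le_ne_bot hp (le_wSpan W d p)

lemma stableUnder_map_ker {hE : StableUnder W E} {f : E →ₗ[ℂ] MvPolynomial (Fin n) ℂ}
    (hf : f ∈ homSpace W (subRep W E hE) d) :
    StableUnder W ((LinearMap.ker f).map E.subtype) := by
  rintro g _ ⟨v, hv : f v = 0, rfl⟩
  exact ⟨subRep W E hE g v, by simp [hf.2 g v, hv], rfl⟩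

lemma eq_zero_of_mem_homSpace_wSpan (hdeg : p ≤ homogeneousSubmodule (Fin n) ℂ b)
    {f : wSpan W b p →ₗ[ℂ] MvPolynomial (Fin n) ℂ}
    (hf : f ∈ homSpace W (subRep W (wSpan W b p) (wSpan_stable W b p)) d)
    (hfp : f ∘ₗ Submodule.inclusion (le_wSpan W b p) = 0) : f = 0 := by
  have hker : wSpan W b p ≤ (LinearMap.ker f).map (wSpan W b p).subtype :=
    sInf_le ⟨(Submodule.map_subtype_le _ _).trans (wSpan_le_homogeneousSubmodule W hdeg),
      stableUnder_map_ker hf,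
      fun v hv => ⟨⟨v, le_wSpan W b p hv⟩, LinearMap.congr_fun hfp ⟨v, hv⟩, rfl⟩⟩
  refine LinearMap.ext fun v => ?_
  obtain ⟨w, hw, hwv⟩ := hker v.2
  rwa [← Subtype.ext hwv]

/-- Restriction of a `W`-equivariant map `E → S^d(V)` to a `W'`-equivariant map `p → S^d(V)`, for
a subgroup `W' ≤ W` and a `W'`-stable subspace `p ≤ E`. -/
noncomputable def homSpaceRestrict (hle : W' ≤ W) (hpE : p ≤ E) (hp : StableUnder W' p)
    (hE : StableUnder W E) (d : ℕ) :
    homSpace W (subRep W E hE) d →ₗ[ℂ] homSpace W' (subRep W' p hp) d :=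
  (LinearMap.lcomp ℂ _ (Submodule.inclusion hpE)).restrict fun _ hf =>
    ⟨fun _ => hf.1 _, fun g v => hf.2 ⟨g, hle g.2⟩ (Submodule.inclusion hpE v)⟩

lemma homSpaceRestrict_wSpan_injective (hle : W' ≤ W)
    (hdeg : p ≤ homogeneousSubmodule (Fin n) ℂ b) (hp : StableUnder W' p) (d : ℕ) :
    Function.Injective (homSpaceRestrict hle (le_wSpan W b p) hp (wSpan_stable W b p) d) :=
  (injective_iff_map_eq_zero _).2 fun f hf =>
    Subtype.ext <| eq_zero_of_mem_homSpace_wSpan hdeg f.2 (congrArg Subtype.val hf)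

lemma occursIn_of_occursIn_wSpan (hle : W' ≤ W) (hdeg : p ≤ homogeneousSubmodule (Fin n) ℂ b)
    (hp : StableUnder W' p) (h : occursIn W (subRep W (wSpan W b p) (wSpan_stable W b p)) d) :
    occursIn W' (subRep W' p hp) d := by
  have := Submodule.nontrivial_iff_ne_bot.2 h
  exact Submodule.nontrivial_iff_ne_bot.1
    (homSpaceRestrict_wSpan_injective hle hdeg hp d).nontrivial

lemma subtype_mem_homSpace (hp : StableUnder W p) (hdeg : p ≤ homogeneousSubmodule (Fin n) ℂ d) :
    p.subtype ∈ homSpace W (subRep W p hp) d :=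
  ⟨fun v => hdeg v.2, fun _ _ => rfl⟩

lemma occursIn_subRep (hp : StableUnder W p) (hne : p ≠ ⊥)
    (hdeg : p ≤ homogeneousSubmodule (Fin n) ℂ d) : occursIn W (subRep W p hp) d :=
  (Submodule.ne_bot_iff _).2 ⟨_, subtype_mem_homSpace hp hdeg, subtype_ne_zero hne⟩

lemma ne_bot_of_finrank_homSpace_pos {hp : StableUnder W p}
    (h : 0 < Module.finrank ℂ (homSpace W (subRep W p hp) d)) : p ≠ ⊥ := by
  rintro rfl
  have := Module.nontrivial_of_finrank_pos h
  exact not_subsingleton (homSpace W (subRep W ⊥ hp) d) inferInstance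

lemma bval_wSpan_eq (hle : W' ≤ W) (hne : p ≠ ⊥) (hdeg : p ≤ homogeneousSubmodule (Fin n) ℂ b)
    (hp : StableUnder W' p) (hb : bval W' (subRep W' p hp) = b) :
    bval W (subRep W (wSpan W b p) (wSpan_stable W b p)) = b := by
  have hoccurs : occursIn W (subRep W (wSpan W b p) (wSpan_stable W b p)) b :=
    occursIn_subRep _ (wSpan_ne_bot W b hne) (wSpan_le_homogeneousSubmodule W hdeg)
  refine le_antisymm (Nat.sInf_le hoccurs) (le_csInf ⟨b, hoccurs⟩ fun d hd => ?_)
  exact hb.symm.trans_le (Nat.sInf_le (occursIn_of_occursIn_wSpan hle hdeg hp hd))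

lemma finrank_homSpace_wSpan_eq_one (hle : W' ≤ W)
    (hdeg : p ≤ homogeneousSubmodule (Fin n) ℂ b) (hp : StableUnder W' p)
    (hmult : Module.finrank ℂ (homSpace W' (subRep W' p hp) b) = 1) :
    Module.finrank ℂ (homSpace W (subRep W (wSpan W b p) (wSpan_stable W b p)) b) = 1 := by
  have hne : p ≠ ⊥ := ne_bot_of_finrank_homSpace_pos (one_pos.trans_eq hmult.symm)
  set H := homSpace W (subRep W (wSpan W b p) (wSpan_stable W b p)) b
  have : Nontrivial H := Submodule.nontrivial_iff_ne_bot.2 <|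
    occursIn_subRep _ (wSpan_ne_bot W b hne) (wSpan_le_homogeneousSubmodule W hdeg)
  exact finrank_eq_one_of_injective (V := H) (V' := homSpace W' (subRep W' p hp) b)
    (homSpaceRestrict_wSpan_injective hle hdeg hp b) hmult

lemma algebraMap_intertwiningMap_surjective_of_finrank_homSpace_eq_one (hp : StableUnder W p)
    (hdeg : p ≤ homogeneousSubmodule (Fin n) ℂ d)
    (hmult : Module.finrank ℂ (homSpace W (subRep W p hp) d) = 1) :
    Function.Surjective
      (algebraMap ℂ ((subRep W p hp).IntertwiningMap (subRep W p hp))) := by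
  intro π
  have hι := subtype_mem_homSpace hp hdeg
  have hιπ : p.subtype ∘ₗ π.toLinearMap ∈ homSpace W (subRep W p hp) d :=
    ⟨fun v => hdeg (π v).2, fun g v => congrArg Subtype.val (π.isIntertwining _ _ g v)⟩
  have hne : p ≠ ⊥ := ne_bot_of_finrank_homSpace_pos (one_pos.trans_eq hmult.symm)
  have hι0 : (⟨_, hι⟩ : homSpace W (subRep W p hp) d) ≠ 0 := fun h =>
    subtype_ne_zero hne (congrArg Subtype.val h)
  obtain ⟨c, hc⟩ := (finrank_eq_one_iff_of_nonzero' (V := homSpace W (subRep W p hp) d)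
    ⟨_, hι⟩ hι0).1 hmult ⟨_, hιπ⟩
  refine ⟨c, DFunLike.ext _ _ fun v => Subtype.ext ?_⟩
  exact LinearMap.congr_fun (congrArg Subtype.val hc) v

lemma irredRep_subRep_of_finrank_homSpace_eq_one [Finite W] (hp : StableUnder W p)
    (hdeg : p ≤ homogeneousSubmodule (Fin n) ℂ d)
    (hmult : Module.finrank ℂ (homSpace W (subRep W p hp) d) = 1) :
    IrredRep (subRep W p hp) := by
  have : Nontrivial p :=
    Submodule.nontrivial_iff_ne_bot.2 (ne_bot_of_finrank_homSpace_pos (one_pos.trans_eq hmult.symm))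
  exact irredRep_of_isIrreducible <| isIrreducible_of_algebraMap_intertwiningMap_surjective _ <|
    algebraMap_intertwiningMap_surjective_of_finrank_homSpace_eq_one hp hdeg hmult

end EquivariantMaps

theorem stmt_4_general (n : ℕ) (W' W : Subgroup (GLn n)) (hle : W' ≤ W) [Finite W]
    (b : ℕ) (p : Submodule ℂ (MvPolynomial (Fin n) ℂ))
    (hdeg : p ≤ MvPolynomial.homogeneousSubmodule (Fin n) ℂ b)
    (hstab : StableUnder W' p)
    (hbE' : bval W' (subRep W' p hstab) = b)
    (hmult : Module.finrank ℂ (homSpace W' (subRep W' p hstab) b) = 1) :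
    IrredRep (subRep W (wSpan W b p) (wSpan_stable W b p)) ∧
      bval W (subRep W (wSpan W b p) (wSpan_stable W b p)) = b ∧
      Module.finrank ℂ (homSpace W (subRep W (wSpan W b p) (wSpan_stable W b p)) b) = 1 := by
  have hne : p ≠ ⊥ := ne_bot_of_finrank_homSpace_pos (one_pos.trans_eq hmult.symm)
  have hmultE := finrank_homSpace_wSpan_eq_one hle hdeg hstab hmult
  exact ⟨irredRep_subRep_of_finrank_homSpace_eq_one _ (wSpan_le_homogeneousSubmodule W hdeg) hmultE,
    bval_wSpan_eq hle hne hdeg hstab hbE', hmultE⟩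

/-- Let `W ⊆ GL(V)` be a finite complex reflection group,
`W′ ⊆ W` a subgroup generated by reflections, and `E′` (`= p`) a `j`-inductible
irreducible representation of `W′`, realized as a `W′`-subrepresentation of
`S^{b(E′)}(V)` (here `b(E′) = b`).  Let `E` be the smallest `W`-stable subspace of
`S^{b(E′)}(V)` containing `E′`.  Then `E` is an irreducible representation of `W`,
`b(E) = b(E′)`, and `E` is itself `j`-inductible. -/
theorem stmt_4 (n : ℕ) (W' W : Subgroup (GLn n)) (hle : W' ≤ W)
    [Finite W] (hW : IsReflGroup W) (hW' : IsReflGroup W')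
    (b : ℕ) (p : Submodule ℂ (MvPolynomial (Fin n) ℂ))
    (hdeg : p ≤ MvPolynomial.homogeneousSubmodule (Fin n) ℂ b)
    (hstab : StableUnder W' p)
    (hirr : IrredRep (subRep W' p hstab))
    (hbE' : bval W' (subRep W' p hstab) = b)
    (hmult : Module.finrank ℂ (homSpace W' (subRep W' p hstab) b) = 1) :
    IrredRep (subRep W (wSpan W b p) (wSpan_stable W b p)) ∧
      bval W (subRep W (wSpan W b p) (wSpan_stable W b p)) = b ∧
      Module.finrank ℂ (homSpace W (subRep W (wSpan W b p) (wSpan_stable W b p)) b) = 1 := by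
  exact stmt_4_general n W' W hle b p hdeg hstab hbE' hmult

end Spets
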